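/- Let d ≥ 2 be an integer, let p, q, r ∈ [1,∞), and let A > 0. Suppose that (∫_{S^{d−1}} (∫_{ξ^⊥} (∫_ℝ f(x + tξ) dt)^r dx)^{q/r} dΩ(ξ))^{1/q} ≤ A ‖f‖_{L^p(ℝ^d)} for every nonnegative measurable f supported in the unit ball B(0,1) ⊂ ℝ^d, where Ω is surface measure on the unit sphere S^{d−1} and the inner integral is over the hyperplane ξ^⊥ with its (d−1)-dimensional Lebesgue measure. Then there is a constant B > 0 (depending only on d, p, q, r) such that for every δ ∈ (0,1] and every nonnegative measurable f supported in B(0,1), ‖K_δ[f]‖_{L^q(S^{d−1},Ω)} ≤ B A δ^{−(d−1)/r} ‖f‖_{L^p(ℝ^d)}. -/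

import Mathlib

open MeasureTheory ENNReal

noncomputable section

/-- `ℝ^d` with the Euclidean structure. -/
abbrev Euc (n : ℕ) := EuclideanSpace ℝ (Fin n)

/-- Surface measure on the unit sphere `S^{d-1}`, realized as `(d-1)`-dimensional
Hausdorff measure restricted to the sphere. -/
def sphereMeasure (d : ℕ) : Measure (Euc d) :=
  (μH[(d:ℝ) - 1] : Measure (Euc d)).restrict (Metric.sphere (0 : Euc d) 1)

/-- `τ_δ(ξ,a)`: the `δ`-neighborhood of the line segment with endpoints `a` and
`a + ξ`. -/
def tube (d : ℕ) (δ : ℝ) (ξ a : Euc d) : Set (Euc d) :=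
  Metric.thickening δ (segment ℝ a (a + ξ))

/-- The Kakeya maximal operator at scale `δ`. -/
def kakeyaMax (d : ℕ) (δ : ℝ) (f : Euc d → ℝ≥0∞) (ξ : Euc d) : ℝ≥0∞ :=
  ⨆ a : Euc d, (volume (tube d δ ξ a))⁻¹ * ∫⁻ y in tube d δ ξ a, f y

/-!
The segment from `a` to `a + ξ` is orthogonal to the hyperplane `ξᗮ`, so its `δ`-neighbourhood lies
in the cylinder over a ball of radius `δ` in `ξᗮ`, and contains a piece of length one of that
cylinder. Fubini's theorem therefore bounds the average of `f` over the neighbourhood by the average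
of its X-ray transform over that ball. Hölder's inequality on the ball, whose measure is a
multiple of `δ ^ (d - 1)`, gives `K_δ f ξ ≲ δ ^ (-(d - 1) / r) ‖X f (ξ, ·)‖_r` for each direction
`ξ`, and it remains to take `L^q` norms in `ξ`.
-/

section Measure

theorem lintegral_le_lintegral_rpow_mul_measure_univ {α : Type*} [MeasurableSpace α]
    {μ : Measure α} {r : ℝ} (hr : 1 ≤ r) {g : α → ℝ≥0∞} (hg : AEMeasurable g μ) :
    ∫⁻ x, g x ∂μ ≤ (∫⁻ x, g x ^ r ∂μ) ^ (1 / r) * μ Set.univ ^ (1 - 1 / r) := by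
  simpa only [eLpNorm', enorm_eq_self, ENNReal.rpow_one, div_one] using
    eLpNorm'_le_eLpNorm'_mul_rpow_measure_univ one_pos hr hg.aestronglyMeasurable

theorem volume_ball_eq_of_finrank_eq {F : Type*} [NormedAddCommGroup F] [InnerProductSpace ℝ F]
    [FiniteDimensional ℝ F] [MeasurableSpace F] [BorelSpace F] {n : ℕ}
    (hn : Module.finrank ℝ F = n) (x : F) {δ : ℝ} (hδ : 0 < δ) :
    volume (Metric.ball x δ) = ENNReal.ofReal (δ ^ n) * volume (Metric.ball (0 : Euc n) 1) := by
  let e : F ≃ₗᵢ[ℝ] Euc n := ((stdOrthonormalBasis ℝ F).reindex (finCongr hn)).repr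
  have hball : e ⁻¹' Metric.ball 0 1 = Metric.ball 0 1 := by
    rw [e.preimage_ball, map_zero]
  rw [Measure.addHaar_ball_of_pos _ x hδ, hn, ← hball,
    e.measurePreserving.measure_preimage measurableSet_ball.nullMeasurableSet]

end Measure

section SegmentNeighbourhood

variable {E : Type*} [NormedAddCommGroup E] [InnerProductSpace ℝ E]

theorem finrank_orthogonal_span_singleton_add_one [FiniteDimensional ℝ E] {ξ : E} (hξ : ξ ≠ 0) :
    Module.finrank ℝ (ℝ ∙ ξ)ᗮ + 1 = Module.finrank ℝ E := by
  rw [← (ℝ ∙ ξ).finrank_add_finrank_orthogonal, finrank_span_singleton hξ, add_comm]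

theorem orthogonalProjectionOnto_orthogonal_singleton_add_smul (ξ a : E) (t : ℝ) :
    (ℝ ∙ ξ)ᗮ.orthogonalProjectionOnto (a + t • ξ) = (ℝ ∙ ξ)ᗮ.orthogonalProjectionOnto a := by
  rw [map_add, map_smul,
    Submodule.orthogonalProjectionOnto_orthogonalComplement_singleton_eq_zero, smul_zero, add_zero]

theorem exists_eq_orthogonalProjectionOnto_add_smul (ξ a : E) :
    ∃ t : ℝ, a = ((ℝ ∙ ξ)ᗮ.orthogonalProjectionOnto a : E) + t • ξ := by
  obtain ⟨t, ht⟩ := Submodule.mem_span_singleton.1 ((ℝ ∙ ξ).starProjection_apply_mem a)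
  refine ⟨t, ?_⟩
  rw [ht, add_comm]
  exact ((ℝ ∙ ξ).starProjection_add_starProjection_orthogonal a).symm

theorem orthogonalProjectionOnto_mem_ball_of_mem_thickening_segment {δ : ℝ} {ξ a y : E}
    (hy : y ∈ Metric.thickening δ (segment ℝ a (a + ξ))) :
    (ℝ ∙ ξ)ᗮ.orthogonalProjectionOnto y ∈
      Metric.ball ((ℝ ∙ ξ)ᗮ.orthogonalProjectionOnto a) δ := by
  obtain ⟨z, hz, hyz⟩ := Metric.mem_thickening_iff.1 hy
  rw [segment_eq_image'] at hz
  obtain ⟨s, -, rfl⟩ := hz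
  rw [add_sub_cancel_left] at hyz
  rw [Metric.mem_ball, ← orthogonalProjectionOnto_orthogonal_singleton_add_smul ξ a s]
  have hcontract := (ℝ ∙ ξ)ᗮ.lipschitzWith_orthogonalProjectionOnto.dist_le_mul y (a + s • ξ)
  rw [NNReal.coe_one, one_mul] at hcontract
  exact hcontract.trans_lt hyz

theorem add_smul_mem_thickening_segment {V : Type*} [SeminormedAddCommGroup V] [NormedSpace ℝ V]
    {δ : ℝ} {ξ x₀ x : V} {t₀ t : ℝ} (hx : x ∈ Metric.ball x₀ δ) (ht : t ∈ Set.Icc t₀ (t₀ + 1)) :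
    x + t • ξ ∈ Metric.thickening δ (segment ℝ (x₀ + t₀ • ξ) (x₀ + t₀ • ξ + ξ)) := by
  refine Metric.mem_thickening_iff.2 ⟨x₀ + t • ξ, ?_, by rwa [dist_add_right]⟩
  rw [segment_eq_image']
  exact ⟨t - t₀, ⟨by linarith [ht.1], by linarith [ht.2]⟩, by module⟩

end SegmentNeighbourhood

section XrayTransform

variable {E : Type*} [NormedAddCommGroup E] [InnerProductSpace ℝ E]

/-- The X-ray transform of `f` in the direction `ξ`: the integral of `f` over the line with
direction `ξ` through the point `x` of the hyperplane `ξᗮ`. -/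
def xrayTransform (f : E → ℝ≥0∞) (ξ : E) (x : (ℝ ∙ ξ)ᗮ) : ℝ≥0∞ :=
  ∫⁻ t : ℝ, f ((x : E) + t • ξ)

variable [FiniteDimensional ℝ E] [MeasurableSpace E] [BorelSpace E]

theorem measurePreserving_orthogonal_add_smul {ξ : E} (hξ : ‖ξ‖ = 1) :
    MeasurePreserving (fun z : (ℝ ∙ ξ)ᗮ × ℝ => (z.1 : E) + z.2 • ξ) := by
  let e := LinearIsometryEquiv.toSpanUnitSingleton (𝕜 := ℝ) ξ hξ
  have hprod : MeasurePreserving (Prod.map e (id : (ℝ ∙ ξ)ᗮ → (ℝ ∙ ξ)ᗮ)) :=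
    e.measurePreserving.prod (MeasurePreserving.id _)
  have hcomp := (ℝ ∙ ξ).orthogonalDecomposition.symm.measurePreserving.comp
    ((WithLp.volume_preserving_toLp _ _).comp (hprod.comp Measure.measurePreserving_swap))
  convert! hcomp using 1
  funext z
  simp [e, add_comm]

theorem measurable_xrayTransform {f : E → ℝ≥0∞} (hf : Measurable f) (ξ : E) :
    Measurable (xrayTransform f ξ) := by
  unfold xrayTransform
  fun_prop

theorem lintegral_xrayTransform {f : E → ℝ≥0∞} (hf : Measurable f) {ξ : E} (hξ : ‖ξ‖ = 1) :
    ∫⁻ x, xrayTransform f ξ x = ∫⁻ y, f y := by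
  have hmp := measurePreserving_orthogonal_add_smul hξ
  rw [← hmp.lintegral_comp hf]
  exact (lintegral_prod _ (hf.comp hmp.measurable).aemeasurable).symm

theorem setLIntegral_thickening_segment_le {f : E → ℝ≥0∞} (hf : Measurable f) {ξ : E}
    (hξ : ‖ξ‖ = 1) (δ : ℝ) (a : E) :
    ∫⁻ y in Metric.thickening δ (segment ℝ a (a + ξ)), f y ≤
      ∫⁻ x in Metric.ball ((ℝ ∙ ξ)ᗮ.orthogonalProjectionOnto a) δ, xrayTransform f ξ x := by
  set T := Metric.thickening δ (segment ℝ a (a + ξ))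
  have hT : MeasurableSet T := Metric.isOpen_thickening.measurableSet
  rw [← lintegral_indicator hT, ← lintegral_xrayTransform (hf.indicator hT) hξ,
    ← lintegral_indicator measurableSet_ball]
  refine lintegral_mono fun x => ?_
  by_cases hx : x ∈ Metric.ball ((ℝ ∙ ξ)ᗮ.orthogonalProjectionOnto a) δ
  · rw [Set.indicator_of_mem hx]
    exact lintegral_mono fun t => Set.indicator_le_self _ _ _
  · have hline (t : ℝ) : (x : E) + t • ξ ∉ T := fun h => hx <| by
      simpa only [orthogonalProjectionOnto_orthogonal_singleton_add_smul,
        Submodule.orthogonalProjectionOnto_mem_subspace_eq_self] using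
        orthogonalProjectionOnto_mem_ball_of_mem_thickening_segment h
    simp [xrayTransform, hline]

theorem volume_ball_le_volume_thickening_segment {ξ : E} (hξ : ‖ξ‖ = 1) (δ : ℝ) (a : E) :
    volume (Metric.ball ((ℝ ∙ ξ)ᗮ.orthogonalProjectionOnto a) δ) ≤
      volume (Metric.thickening δ (segment ℝ a (a + ξ))) := by
  set x₀ := (ℝ ∙ ξ)ᗮ.orthogonalProjectionOnto a
  obtain ⟨t₀, ha⟩ := exists_eq_orthogonalProjectionOnto_add_smul ξ a
  calc volume (Metric.ball x₀ δ)
      = volume (Metric.ball x₀ δ ×ˢ Set.Icc t₀ (t₀ + 1)) := by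
        simp [Measure.volume_eq_prod]
    _ ≤ volume ((fun z : (ℝ ∙ ξ)ᗮ × ℝ => (z.1 : E) + z.2 • ξ) ⁻¹'
          Metric.thickening δ (segment ℝ a (a + ξ))) := by
        refine measure_mono fun z hz => ?_
        rw [Set.mem_preimage, ha]
        exact add_smul_mem_thickening_segment hz.1 hz.2
    _ = volume (Metric.thickening δ (segment ℝ a (a + ξ))) :=
        (measurePreserving_orthogonal_add_smul hξ).measure_preimage
          Metric.isOpen_thickening.measurableSet.nullMeasurableSet

theorem setLIntegral_thickening_segment_le_lintegral_rpow {f : E → ℝ≥0∞} (hf : Measurable f)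
    {ξ : E} (hξ : ‖ξ‖ = 1) {r : ℝ} (hr : 1 ≤ r) (δ : ℝ) (a : E) :
    ∫⁻ y in Metric.thickening δ (segment ℝ a (a + ξ)), f y ≤
      (∫⁻ x, xrayTransform f ξ x ^ r) ^ (1 / r) *
        volume (Metric.ball (0 : (ℝ ∙ ξ)ᗮ) δ) ^ (1 - 1 / r) := by
  set x₀ := (ℝ ∙ ξ)ᗮ.orthogonalProjectionOnto a
  calc ∫⁻ y in Metric.thickening δ (segment ℝ a (a + ξ)), f y
      ≤ ∫⁻ x in Metric.ball x₀ δ, xrayTransform f ξ x :=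
        setLIntegral_thickening_segment_le hf hξ δ a
    _ ≤ (∫⁻ x in Metric.ball x₀ δ, xrayTransform f ξ x ^ r) ^ (1 / r) *
          volume (Metric.ball (0 : (ℝ ∙ ξ)ᗮ) δ) ^ (1 - 1 / r) := by
        rw [← Measure.addHaar_ball_center volume x₀, ← Measure.restrict_apply_univ]
        exact lintegral_le_lintegral_rpow_mul_measure_univ hr
          (measurable_xrayTransform hf ξ).aemeasurable
    _ ≤ (∫⁻ x, xrayTransform f ξ x ^ r) ^ (1 / r) *
          volume (Metric.ball (0 : (ℝ ∙ ξ)ᗮ) δ) ^ (1 - 1 / r) := by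
        grw [setLIntegral_le_lintegral]

theorem inv_volume_mul_setLIntegral_thickening_segment_le {f : E → ℝ≥0∞} (hf : Measurable f)
    {ξ : E} (hξ : ‖ξ‖ = 1) {r δ : ℝ} (hr : 1 ≤ r) (hδ : 0 < δ) (a : E) :
    (volume (Metric.thickening δ (segment ℝ a (a + ξ))))⁻¹ *
        ∫⁻ y in Metric.thickening δ (segment ℝ a (a + ξ)), f y ≤
      volume (Metric.ball (0 : (ℝ ∙ ξ)ᗮ) δ) ^ (-(1 / r)) *
        (∫⁻ x, xrayTransform f ξ x ^ r) ^ (1 / r) := by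
  set T := Metric.thickening δ (segment ℝ a (a + ξ))
  set V := volume (Metric.ball (0 : (ℝ ∙ ξ)ᗮ) δ)
  have hV₀ : V ≠ 0 := (Metric.measure_ball_pos _ _ hδ).ne'
  have hV_top : V ≠ ⊤ := measure_ball_lt_top.ne
  have hvolume : V ≤ volume T := by
    grw [← volume_ball_le_volume_thickening_segment hξ δ a, Measure.addHaar_ball_center]
  calc (volume T)⁻¹ * ∫⁻ y in T, f y
      ≤ V⁻¹ * ((∫⁻ x, xrayTransform f ξ x ^ r) ^ (1 / r) * V ^ (1 - 1 / r)) := by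
        grw [hvolume, setLIntegral_thickening_segment_le_lintegral_rpow hf hξ hr δ a]
    _ = V ^ (-1 + (1 - 1 / r)) * (∫⁻ x, xrayTransform f ξ x ^ r) ^ (1 / r) := by
        rw [ENNReal.rpow_add _ _ hV₀ hV_top, ENNReal.rpow_neg_one]
        ring
    _ = V ^ (-(1 / r)) * (∫⁻ x, xrayTransform f ξ x ^ r) ^ (1 / r) := by
        rw [neg_add_eq_sub, sub_sub_cancel_left]

end XrayTransform

section Kakeya

theorem kakeyaMax_le_mul_lintegral_xrayTransform_rpow {d : ℕ} {f : Euc d → ℝ≥0∞}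
    (hf : Measurable f) {ξ : Euc d} (hξ : ‖ξ‖ = 1) {r δ : ℝ} (hr : 1 ≤ r) (hδ : 0 < δ) :
    kakeyaMax d δ f ξ ≤
      volume (Metric.ball (0 : (ℝ ∙ ξ)ᗮ) δ) ^ (-(1 / r)) *
        (∫⁻ x, xrayTransform f ξ x ^ r) ^ (1 / r) :=
  iSup_le (inv_volume_mul_setLIntegral_thickening_segment_le hf hξ hr hδ)

theorem ae_norm_eq_one_sphereMeasure (d : ℕ) : ∀ᵐ ξ ∂sphereMeasure d, ‖ξ‖ = 1 := by
  filter_upwards [ae_restrict_mem Metric.isClosed_sphere.measurableSet] with ξ hξ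
  exact mem_sphere_zero_iff_norm.1 hξ

theorem volume_ball_orthogonal_rpow {d : ℕ} {ξ : Euc d} (hξ : ξ ≠ 0) (r : ℝ) {δ : ℝ}
    (hδ : 0 < δ) :
    volume (Metric.ball (0 : (ℝ ∙ ξ)ᗮ) δ) ^ (-(1 / r)) =
      ENNReal.ofReal (volume.real (Metric.ball (0 : Euc (d - 1)) 1) ^ (-(1 / r)) *
        δ ^ (-((d : ℝ) - 1) / r)) := by
  have hrank : Module.finrank ℝ (ℝ ∙ ξ)ᗮ + 1 = d := by
    rw [finrank_orthogonal_span_singleton_add_one hξ, finrank_euclideanSpace_fin]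
  have hcast : ((d - 1 : ℕ) : ℝ) = (d : ℝ) - 1 := by
    rw [← hrank, Nat.add_sub_cancel, Nat.cast_add_one, add_sub_cancel_right]
  have hunit : 0 < volume.real (Metric.ball (0 : Euc (d - 1)) 1) :=
    ENNReal.toReal_pos (Metric.measure_ball_pos _ _ one_pos).ne' measure_ball_lt_top.ne
  rw [volume_ball_eq_of_finrank_eq (Nat.eq_sub_of_add_eq hrank) _ hδ,
    ← ofReal_measureReal measure_ball_lt_top.ne, ← ENNReal.ofReal_mul (by positivity),
    ENNReal.ofReal_rpow_of_pos (by positivity), Real.mul_rpow (by positivity) hunit.le,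
    ← Real.rpow_natCast, ← Real.rpow_mul hδ.le, hcast, mul_comm]
  congr 3
  ring

end Kakeya

theorem statement8_general (d : ℕ) {r : ℝ} (hr : 1 ≤ r) :
    ∃ B : ℝ, 0 < B ∧ ∀ ν : Measure (Euc d), (∀ᵐ ξ ∂ν, ‖ξ‖ = 1) →
      ∀ q : ℝ, 0 < q → ∀ δ : ℝ, 0 < δ → ∀ f : Euc d → ℝ≥0∞, Measurable f →
        (∫⁻ ξ, kakeyaMax d δ f ξ ^ q ∂ν) ^ (1 / q) ≤
          ENNReal.ofReal (B * δ ^ (-((d : ℝ) - 1) / r)) *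
            (∫⁻ ξ, (∫⁻ x, xrayTransform f ξ x ^ r) ^ (q / r) ∂ν) ^ (1 / q) := by
  refine ⟨volume.real (Metric.ball (0 : Euc (d - 1)) 1) ^ (-(1 / r)), Real.rpow_pos_of_pos
    (ENNReal.toReal_pos (Metric.measure_ball_pos _ _ one_pos).ne' measure_ball_lt_top.ne) _, ?_⟩
  intro ν hν q hq δ hδ f hf
  set C := ENNReal.ofReal (volume.real (Metric.ball (0 : Euc (d - 1)) 1) ^ (-(1 / r)) *
    δ ^ (-((d : ℝ) - 1) / r))
  have hpointwise : ∀ᵐ ξ ∂ν, kakeyaMax d δ f ξ ^ q ≤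
      C ^ q * (∫⁻ x, xrayTransform f ξ x ^ r) ^ (q / r) := by
    filter_upwards [hν] with ξ hξ
    have hξ₀ : ξ ≠ 0 := norm_ne_zero_iff.1 (hξ ▸ one_ne_zero)
    calc kakeyaMax d δ f ξ ^ q
        ≤ (C * (∫⁻ x, xrayTransform f ξ x ^ r) ^ (1 / r)) ^ q := by
          grw [kakeyaMax_le_mul_lintegral_xrayTransform_rpow hf hξ hr hδ,
            volume_ball_orthogonal_rpow hξ₀ r hδ]
      _ = C ^ q * (∫⁻ x, xrayTransform f ξ x ^ r) ^ (q / r) := by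
          rw [ENNReal.mul_rpow_of_nonneg _ _ hq.le, ← ENNReal.rpow_mul, one_div_mul_eq_div]
  calc (∫⁻ ξ, kakeyaMax d δ f ξ ^ q ∂ν) ^ (1 / q)
      ≤ (C ^ q * ∫⁻ ξ, (∫⁻ x, xrayTransform f ξ x ^ r) ^ (q / r) ∂ν) ^ (1 / q) := by
        grw [lintegral_mono_ae hpointwise, lintegral_const_mul' _ _ (by finiteness)]
    _ = C * (∫⁻ ξ, (∫⁻ x, xrayTransform f ξ x ^ r) ^ (q / r) ∂ν) ^ (1 / q) := by
        rw [ENNReal.mul_rpow_of_nonneg _ _ (by positivity), one_div,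
          ENNReal.rpow_rpow_inv (ne_of_gt hq)]

/-- The mixed-norm x-ray bound (in its conventional form over the sphere) implies
the corresponding Kakeya maximal operator bound
`‖K_δ[f]‖_{L^q(S^{d-1})} ≲ A δ^{-(d-1)/r} ‖f‖_{L^p}`. -/
theorem statement8 (d : ℕ) (hd : 2 ≤ d) (p q r : ℝ)
    (hp : 1 ≤ p) (hq : 1 ≤ q) (hr : 1 ≤ r) (A : ℝ) (hA : 0 < A)
    (hbound : ∀ f : Euc d → ℝ≥0∞, Measurable f →
      (∀ z, z ∉ Metric.ball (0 : Euc d) 1 → f z = 0) →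
      (∫⁻ ξ, (∫⁻ x : ↥((ℝ ∙ ξ)ᗮ), (∫⁻ t : ℝ, f ((x : Euc d) + t • ξ)) ^ r) ^ (q / r)
          ∂sphereMeasure d) ^ (1 / q)
        ≤ ENNReal.ofReal A * (∫⁻ z, f z ^ p) ^ (1 / p)) :
    ∃ B : ℝ, 0 < B ∧ ∀ δ : ℝ, δ ∈ Set.Ioc (0:ℝ) 1 →
      ∀ f : Euc d → ℝ≥0∞, Measurable f →
        (∀ z, z ∉ Metric.ball (0 : Euc d) 1 → f z = 0) →
        (∫⁻ ξ, (kakeyaMax d δ f ξ) ^ q ∂sphereMeasure d) ^ (1 / q)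
          ≤ ENNReal.ofReal (B * A * δ ^ (-((d:ℝ) - 1) / r)) *
              (∫⁻ z, f z ^ p) ^ (1 / p) := by
  obtain ⟨B, hB, hmain⟩ := statement8_general d hr
  refine ⟨B, hB, fun δ hδ f hf hsupp => ((hmain _ (ae_norm_eq_one_sphereMeasure d) q
    (by positivity) δ hδ.1 f hf).trans (mul_le_mul_right (hbound f hf hsupp) _)).trans_eq ?_⟩
  rw [← mul_assoc, ← ENNReal.ofReal_mul' hA.le, mul_right_comm]

end
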